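/- In a consecutive transition, a moving label whose movement is diagonal overlaps at most 14 other labels during the entire transition. -/

import Mathlib

open Set

/-- The closed axis-aligned unit square with lower-left corner `a`. -/
def unitSq (a : ℝ × ℝ) : Set (ℝ × ℝ) :=
  Set.Icc a.1 (a.1 + 1) ×ˢ Set.Icc a.2 (a.2 + 1)

/-- Two unit squares, given by their lower-left corners, overlap if their interiors intersect. -/
def Overlap (a b : ℝ × ℝ) : Prop :=
  (interior (unitSq a) ∩ interior (unitSq b)).Nonempty

/-- `a` is the lower-left corner of one of the four candidate positions of point `p`
(the four closed unit squares having `p` as a corner). -/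
def IsCandidate (p a : ℝ × ℝ) : Prop :=
  a = p ∨ a = (p.1 - 1, p.2) ∨ a = (p.1, p.2 - 1) ∨ a = (p.1 - 1, p.2 - 1)

/-- Two unit squares (given by lower-left corners) share an edge. -/
def SharesEdge (a b : ℝ × ℝ) : Prop :=
  (a.1 = b.1 ∧ (a.2 - b.2 = 1 ∨ b.2 - a.2 = 1)) ∨
  (a.2 = b.2 ∧ (a.1 - b.1 = 1 ∨ b.1 - a.1 = 1))

/-- A movement of the unit-square label of point `p` from candidate position `S` to candidate
position `E`.  If `S` and `E` share an edge (a non-diagonal movement) we set `I = E` and the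
label translates directly from `S` to `E`; if `S` and `E` are diagonally opposite (a diagonal
movement) the label translates through the specified intermediate candidate position `I`,
which shares an edge with both `S` and `E`. -/
structure Movement where
  p : ℝ × ℝ
  S : ℝ × ℝ
  I : ℝ × ℝ
  E : ℝ × ℝ
  candS : IsCandidate p S
  candI : IsCandidate p I
  candE : IsCandidate p E
  legs : (I = E ∧ SharesEdge S E) ∨
    (SharesEdge S I ∧ SharesEdge I E ∧ S.1 ≠ E.1 ∧ S.2 ≠ E.2)

/-- A movement is diagonal if the start and end positions are diagonally opposite
(equivalently, the intermediate position differs from the end position). -/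
def Movement.Diagonal (m : Movement) : Prop := m.I ≠ m.E

/-- Position (lower-left corner) of a moving label at time `t` after the start of its movement:
unit-speed axis-aligned translation, one unit of time per axis-aligned leg; the label rests at
its start position before the movement begins and at its end position after it is finished. -/
noncomputable def Movement.pos (m : Movement) (t : ℝ) : ℝ × ℝ :=
  if t ≤ 0 then m.S
  else if t ≤ 1 then m.S + t • (m.I - m.S)
  else if t ≤ 2 then m.I + (t - 1) • (m.E - m.I)
  else m.E

/-- Duration of a movement: one unit of time per axis-aligned translation. -/
noncomputable def Movement.dur (m : Movement) : ℝ := if m.I = m.E then 1 else 2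

/-- A transition instance: finitely many stationary labels (given by their lower-left corners)
and `n` moving labels, each with a prescribed movement, such that the labeling `L₁` formed by
the stationary labels together with the start positions of the moving labels is overlap-free,
and the labeling `L₂` formed by the stationary labels together with the end positions of the
moving labels is overlap-free. -/
structure TransitionInstance (k n : ℕ) where
  stat : Fin k → ℝ × ℝ
  mov : Fin n → Movement
  free_start : ∀ a b : Fin k ⊕ Fin n, a ≠ b →
    ¬ Overlap (Sum.elim stat (fun j => (mov j).S) a)
      (Sum.elim stat (fun j => (mov j).S) b)
  free_end : ∀ a b : Fin k ⊕ Fin n, a ≠ b →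
    ¬ Overlap (Sum.elim stat (fun j => (mov j).E) a)
      (Sum.elim stat (fun j => (mov j).E) b)

/-- A schedule `τ` of starting times is consecutive if the execution intervals of the movements
are pairwise non-overlapping, i.e. the movements are executed one after another in some order. -/
def Consecutive {k n : ℕ} (T : TransitionInstance k n) (τ : Fin n → ℝ) : Prop :=
  ∀ i j : Fin n, i ≠ j →
    τ i + (T.mov i).dur ≤ τ j ∨ τ j + (T.mov j).dur ≤ τ i

/-- Position (lower-left corner) of each label at global time `t`, when moving label `j`
starts its movement at time `τ j`; stationary labels never move. -/
noncomputable def traj {k n : ℕ} (T : TransitionInstance k n) (τ : Fin n → ℝ) (t : ℝ) :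
    Fin k ⊕ Fin n → ℝ × ℝ :=
  Sum.elim T.stat (fun j => (T.mov j).pos (t - τ j))

/-- The number of overlaps during the transition: the number of unordered pairs of distinct
labels whose interiors intersect at some moment. -/
noncomputable def overlapCount {k n : ℕ} (T : TransitionInstance k n) (τ : Fin n → ℝ) : ℕ :=
  Set.ncard {q : Sym2 (Fin k ⊕ Fin n) | ∃ a b : Fin k ⊕ Fin n,
    q = s(a, b) ∧ a ≠ b ∧ ∃ t : ℝ, Overlap (traj T τ t a) (traj T τ t b)}

/-!
A unit square is a ball of radius `1 / 2` in the sup metric of `ℝ × ℝ`, so two labels overlap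
exactly when their lower-left corners are at distance less than `1`. Normalise the diagonal
movement to `(-1, -1) → (0, -1) → (0, 0)`. A label that moves later and overlaps it starts in the
cross `[0, 1) × (-2, 2) ∪ (-2, 2) × [0, 1)` or ends in the mirror image of that cross under the
reflection that exchanges `(-1, -1)` and `(0, 0)`; reversing time gives the same conclusion for a
label that moves earlier. The cross is covered by seven half-open unit cells, and a cell contains
at most one of the pairwise non-overlapping start (or end) positions, whence the bound `7 + 7`.
-/

lemma unitSq_eq_closedBall (a : ℝ × ℝ) :
    unitSq a = Metric.closedBall (a + (1 / 2, 1 / 2)) (1 / 2) := by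
  rw [← closedBall_prod_same, Real.closedBall_eq_Icc, Real.closedBall_eq_Icc, unitSq]
  norm_num [add_assoc]

lemma overlap_iff_dist_lt {a b : ℝ × ℝ} : Overlap a b ↔ dist a b < 1 := by
  rw [Overlap, unitSq_eq_closedBall, unitSq_eq_closedBall, interior_closedBall _ (by norm_num),
    interior_closedBall _ (by norm_num), ← not_disjoint_iff_nonempty_inter,
    disjoint_ball_ball_iff (by norm_num) (by norm_num), dist_add_right, not_le]
  norm_num

lemma Overlap.symm {a b : ℝ × ℝ} (h : Overlap a b) : Overlap b a := by
  rwa [overlap_iff_dist_lt, dist_comm, ← overlap_iff_dist_lt]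

/-- `i` is a corner of the axis-parallel box spanned by `s` and `e`, whose sides have length at most
`1`. This is the shape of every movement `s → i → e`, diagonal or not, and the degenerate case
`s = i = e` covers stationary labels. -/
def IsCornerPath (s i e : ℝ × ℝ) : Prop :=
  (i = (s.1, e.2) ∨ i = (e.1, s.2)) ∧ dist s e ≤ 1

namespace IsCornerPath

variable {s i e : ℝ × ℝ}

lemma refl (s : ℝ × ℝ) : IsCornerPath s s s := ⟨Or.inl rfl, by simp⟩

lemma symm (h : IsCornerPath s i e) : IsCornerPath e i s :=
  ⟨h.1.symm, by rw [dist_comm]; exact h.2⟩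

lemma axis_leg (h : IsCornerPath s i e) : (s.1 = i.1 ∨ s.2 = i.2) ∧ dist s i ≤ 1 := by
  obtain ⟨rfl | rfl, hd⟩ := h
  all_goals rw [Prod.dist_eq, max_le_iff] at hd
  · exact ⟨Or.inl rfl, by simp [Prod.dist_eq, hd.2]⟩
  · exact ⟨Or.inr rfl, by simp [Prod.dist_eq, hd.1]⟩

end IsCornerPath

/-- Isometries of the plane (in the sup metric) that preserve corner paths: the changes of
coordinates that normalise a diagonal movement. -/
structure IsGridIsometry (φ : ℝ × ℝ → ℝ × ℝ) : Prop where
  isometry : Isometry φ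
  map_isCornerPath : ∀ {s i e : ℝ × ℝ}, IsCornerPath s i e → IsCornerPath (φ s) (φ i) (φ e)

lemma IsGridIsometry.comp {φ ψ : ℝ × ℝ → ℝ × ℝ} (hφ : IsGridIsometry φ) (hψ : IsGridIsometry ψ) :
    IsGridIsometry (φ ∘ ψ) :=
  ⟨hφ.isometry.comp hψ.isometry, fun h => hφ.map_isCornerPath (hψ.map_isCornerPath h)⟩

lemma isGridIsometry_swap : IsGridIsometry Prod.swap := by
  have hiso : Isometry (Prod.swap : ℝ × ℝ → ℝ × ℝ) :=
    Isometry.of_dist_eq fun a b => by simp [Prod.dist_eq, max_comm]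
  refine ⟨hiso, ?_⟩
  rintro s i e ⟨rfl | rfl, hd⟩
  · exact ⟨Or.inr rfl, by rwa [hiso.dist_eq]⟩
  · exact ⟨Or.inl rfl, by rwa [hiso.dist_eq]⟩

lemma isGridIsometry_mul_sub {ε δ : ℝ} (hε : |ε| = 1) (hδ : |δ| = 1) (c : ℝ × ℝ) :
    IsGridIsometry fun a => (ε * (a.1 - c.1), δ * (a.2 - c.2)) := by
  have hiso : Isometry fun a : ℝ × ℝ => (ε * (a.1 - c.1), δ * (a.2 - c.2)) :=
    Isometry.of_dist_eq fun a b => by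
      simp [Prod.dist_eq, Real.dist_eq, ← mul_sub, abs_mul, hε, hδ]
  refine ⟨hiso, ?_⟩
  rintro s i e ⟨rfl | rfl, hd⟩
  · exact ⟨Or.inl rfl, by rwa [hiso.dist_eq]⟩
  · exact ⟨Or.inr rfl, by rwa [hiso.dist_eq]⟩

/-- The reflection in the line `x + y = -1`, which exchanges the start `(-1, -1)` and the end
`(0, 0)` of the normalised diagonal movement and fixes its intermediate position `(0, -1)`. -/
def reflect (a : ℝ × ℝ) : ℝ × ℝ := (-1 - a.2, -1 - a.1)

lemma reflect_reflect (a : ℝ × ℝ) : reflect (reflect a) = a := by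
  simp [reflect]

lemma isGridIsometry_reflect : IsGridIsometry reflect := by
  have heq : reflect = Prod.swap ∘ fun a => (-1 * (a.1 - (-1)), -1 * (a.2 - (-1))) := by
    funext a
    ext <;> simp [reflect] <;> ring
  rw [heq]
  exact isGridIsometry_swap.comp (isGridIsometry_mul_sub (by simp) (by simp) (-1, -1))

lemma SharesEdge.abs_sub_eq_one {a b : ℝ × ℝ} (h : SharesEdge a b) :
    (a.1 = b.1 ∧ |b.2 - a.2| = 1) ∨ (a.2 = b.2 ∧ |b.1 - a.1| = 1) := by
  simp only [abs_eq (zero_le_one' ℝ)]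
  refine h.imp (And.imp_right ?_) (And.imp_right ?_) <;>
  · rintro (h | h)
    · right; linarith
    · left; linarith

lemma SharesEdge.ne {a b : ℝ × ℝ} (h : SharesEdge a b) : a ≠ b := by
  rintro rfl
  simpa using h.abs_sub_eq_one

namespace Movement

lemma Diagonal.corner_of_unit_box {m : Movement} (hm : m.Diagonal) :
    |m.E.1 - m.S.1| = 1 ∧ |m.E.2 - m.S.2| = 1 ∧
      (m.I = (m.S.1, m.E.2) ∨ m.I = (m.E.1, m.S.2)) := by
  obtain ⟨hIE, -⟩ | ⟨hSI, hIE, h₁, h₂⟩ := m.legs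
  · exact absurd hIE hm
  obtain ⟨hS, dS⟩ | ⟨hS, dS⟩ := hSI.abs_sub_eq_one <;>
    obtain ⟨hE, dE⟩ | ⟨hE, dE⟩ := hIE.abs_sub_eq_one
  · exact absurd (hS.trans hE) h₁
  · exact ⟨hS ▸ dE, hE ▸ dS, Or.inl (Prod.ext hS.symm hE)⟩
  · exact ⟨hE ▸ dS, hS ▸ dE, Or.inr (Prod.ext hE hS.symm)⟩
  · exact absurd (hS.trans hE) h₂

lemma isCornerPath (m : Movement) : IsCornerPath m.S m.I m.E := by
  obtain ⟨hIE, hSE⟩ | ⟨-, hIE, -⟩ := m.legs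
  · rw [hIE, IsCornerPath, dist_comm, Prod.dist_eq, Real.dist_eq, Real.dist_eq]
    obtain ⟨h, d⟩ | ⟨h, d⟩ := hSE.abs_sub_eq_one
    · exact ⟨Or.inl (Prod.ext h.symm rfl), by simp [h, d]⟩
    · exact ⟨Or.inr (Prod.ext rfl h.symm), by simp [h, d]⟩
  · have hdiag : m.Diagonal := hIE.ne
    obtain ⟨h₁, h₂, hI⟩ := hdiag.corner_of_unit_box
    refine ⟨hI, ?_⟩
    rw [dist_comm, Prod.dist_eq, Real.dist_eq, Real.dist_eq, h₁, h₂, max_self]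

lemma Diagonal.exists_normalization {m : Movement} (hm : m.Diagonal) :
    ∃ φ, IsGridIsometry φ ∧ φ m.S = (-1, -1) ∧ φ m.I = (0, -1) ∧ φ m.E = (0, 0) := by
  obtain ⟨h₁, h₂, hI⟩ := hm.corner_of_unit_box
  have hφ := isGridIsometry_mul_sub h₁ h₂ m.E
  have mul_neg_self {x y : ℝ} (h : |x - y| = 1) : (x - y) * (y - x) = -1 := by
    linear_combination -((sq_abs (x - y)).symm.trans (by rw [h, one_pow]))
  obtain hI | hI := hI
  · exact ⟨_, isGridIsometry_swap.comp hφ, by simp [mul_neg_self, h₁, h₂],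
      by simp [hI, mul_neg_self, h₁], by simp⟩
  · exact ⟨_, hφ, by simp [mul_neg_self, h₁, h₂], by simp [hI, mul_neg_self, h₂], by simp⟩

lemma pos_of_nonpos (m : Movement) {t : ℝ} (ht : t ≤ 0) : m.pos t = m.S := if_pos ht

lemma pos_of_dur_le (m : Movement) {t : ℝ} (ht : m.dur ≤ t) : m.pos t = m.E := by
  unfold Movement.dur at ht
  unfold Movement.pos
  split_ifs at ht with hIE
  · have hlate : ¬ t ≤ 0 := by linarith
    rw [if_neg hlate, hIE]
    split_ifs with h₁
    · simp [le_antisymm h₁ ht]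
    · simp
    · rfl
  · have hlate : ¬ t ≤ 0 ∧ ¬ t ≤ 1 := by constructor <;> linarith
    rw [if_neg hlate.1, if_neg hlate.2]
    split_ifs with h₂
    · norm_num [le_antisymm h₂ ht]
    · rfl

lemma pos_mem_segment (m : Movement) (t : ℝ) :
    m.pos t ∈ segment ℝ m.S m.I ∪ segment ℝ m.I m.E := by
  unfold Movement.pos
  split_ifs with h₀ h₁ h₂
  · exact Or.inl (left_mem_segment ..)
  · exact Or.inl (segment_eq_image' ℝ m.S m.I ▸ ⟨t, ⟨by linarith, h₁⟩, rfl⟩)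
  · exact Or.inr (segment_eq_image' ℝ m.I m.E ▸ ⟨t - 1, ⟨by linarith, by linarith⟩, rfl⟩)
  · exact Or.inr (right_mem_segment ..)

end Movement

lemma dist_lt_or_of_mem_segment_real {a b p x r : ℝ} (hab : dist a b < 2 * r)
    (hp : p ∈ segment ℝ a b) (hx : dist p x < r) : dist a x < r ∨ dist b x < r := by
  wlog h : a ≤ b generalizing a b
  · exact (this (dist_comm a b ▸ hab) (segment_symm ℝ a b ▸ hp) (le_of_not_ge h)).symm
  rw [segment_eq_Icc h] at hp
  obtain ⟨hap, hpb⟩ := hp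
  simp only [Real.dist_eq, abs_lt] at *
  by_cases hxa : x < a + r
  · left; constructor <;> linarith
  · right; constructor <;> linarith

lemma dist_lt_or_of_mem_segment {A B P X : ℝ × ℝ} {r : ℝ} (haxis : A.1 = B.1 ∨ A.2 = B.2)
    (hAB : dist A B < 2 * r) (hP : P ∈ segment ℝ A B) (hX : dist P X < r) :
    dist A X < r ∨ dist B X < r := by
  obtain ⟨hP₁, hP₂⟩ := Prod.segment_subset _ _ hP
  simp only [Prod.dist_eq, max_lt_iff] at *
  obtain h | h := haxis
  · have hP : P.1 = B.1 := by simpa [h] using hP₁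
    obtain hA | hB := dist_lt_or_of_mem_segment_real hAB.2 hP₂ hX.2
    · exact Or.inl ⟨by rw [h, ← hP]; exact hX.1, hA⟩
    · exact Or.inr ⟨hP ▸ hX.1, hB⟩
  · have hP : P.2 = B.2 := by simpa [h] using hP₂
    obtain hA | hB := dist_lt_or_of_mem_segment_real hAB.1 hP₁ hX.1
    · exact Or.inl ⟨hA, by rw [h, ← hP]; exact hX.2⟩
    · exact Or.inr ⟨hB, hP ▸ hX.2⟩

lemma Movement.dist_lt_of_pos (m : Movement) {t : ℝ} {X : ℝ × ℝ} (h : dist (m.pos t) X < 1) :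
    dist m.S X < 1 ∨ dist m.I X < 1 ∨ dist m.E X < 1 := by
  obtain ⟨axisS, lenS⟩ := m.isCornerPath.axis_leg
  obtain ⟨axisE, lenE⟩ := m.isCornerPath.symm.axis_leg
  obtain hseg | hseg := m.pos_mem_segment t
  · exact (dist_lt_or_of_mem_segment axisS (by linarith) hseg h).imp_right Or.inl
  · rw [segment_symm] at hseg
    exact Or.inr (dist_lt_or_of_mem_segment axisE (by linarith) hseg h).symm

/-- A label that leaves `s` through `i` overlaps a label that moves earlier through `I` to `E`:
either the former still rests in `s` when the latter passes `I` or `E`, or it passes `i` when the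
latter rests in `E`. Overlaps of two start or two end positions are left out, as a transition
instance excludes them. -/
def Conflict (s i I E : ℝ × ℝ) : Prop :=
  dist s I < 1 ∨ dist s E < 1 ∨ dist i E < 1

lemma Conflict.reverse {s i I E : ℝ × ℝ} (h : Conflict s i I E) : Conflict E I i s := by
  unfold Conflict at *
  rw [dist_comm E i, dist_comm E s, dist_comm I s]
  tauto

lemma Conflict.map {φ : ℝ × ℝ → ℝ × ℝ} (hφ : Isometry φ) {s i I E : ℝ × ℝ}
    (h : Conflict s i I E) : Conflict (φ s) (φ i) (φ I) (φ E) := by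
  simpa only [Conflict, hφ.dist_eq] using h

lemma Movement.conflict_of_overlap {m m' : Movement} (hS : ¬ Overlap m.S m'.S)
    (hE : ¬ Overlap m.E m'.E) {t t' : ℝ} (horder : t ≤ 0 ∨ m'.dur ≤ t')
    (h : Overlap (m.pos t) (m'.pos t')) : Conflict m.S m.I m'.I m'.E := by
  rw [overlap_iff_dist_lt] at hS hE h
  unfold Conflict
  obtain ht | ht := horder
  · rw [m.pos_of_nonpos ht, dist_comm] at h
    have hmeets := m'.dist_lt_of_pos h
    simp only [dist_comm _ m.S] at hmeets
    tauto
  · rw [m'.pos_of_dur_le ht] at h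
    have hmeets := m.dist_lt_of_pos h
    tauto

/-- A cross covered by seven half-open unit cells, which contains the start positions of the labels
moving after the normalised diagonal movement and overlapping it, up to labels whose end position
lies in the reflected cross. -/
def cross : Set (ℝ × ℝ) := Ico 0 1 ×ˢ Ioo (-2) 2 ∪ Ioo (-2) 2 ×ˢ Ico 0 1

lemma mem_cross {a : ℝ × ℝ} : a ∈ cross ↔
    ((0 ≤ a.1 ∧ a.1 < 1) ∧ (-2 < a.2 ∧ a.2 < 2)) ∨
      ((-2 < a.1 ∧ a.1 < 2) ∧ (0 ≤ a.2 ∧ a.2 < 1)) :=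
  Iff.rfl

lemma ncard_mem_cross_le {ι : Type*} {f : ι → ℝ × ℝ}
    (hf : Pairwise fun a b => 1 ≤ dist (f a) (f b)) : {a | f a ∈ cross}.ncard ≤ 7 := by
  let cell : ι → ℤ × ℤ := fun a => (⌊(f a).1⌋, ⌊(f a).2⌋)
  let cells : Finset (ℤ × ℤ) := {0} ×ˢ Finset.Icc (-2) 1 ∪ Finset.Icc (-2) 1 ×ˢ {0}
  have floor_zero {x : ℝ} (hx : 0 ≤ x ∧ x < 1) : ⌊x⌋ = 0 := Int.floor_eq_zero_iff.2 hx
  have floor_mem {x : ℝ} (hx : -2 < x ∧ x < 2) : -2 ≤ ⌊x⌋ ∧ ⌊x⌋ ≤ 1 :=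
    ⟨Int.le_floor.2 (by exact_mod_cast hx.1.le),
      Int.lt_add_one_iff.1 (Int.floor_lt.2 (by exact_mod_cast hx.2))⟩
  have hmaps : ∀ a ∈ {a | f a ∈ cross}, cell a ∈ (cells : Set (ℤ × ℤ)) := by
    rintro a (⟨h₁, h₂⟩ | ⟨h₁, h₂⟩)
    · simp [cells, cell, floor_zero h₁, floor_mem h₂]
    · simp [cells, cell, floor_zero h₂, floor_mem h₁]
  have hinj : InjOn cell {a | f a ∈ cross} := by
    intro a _ b _ hab
    by_contra hne
    refine (hf hne).not_gt (max_lt ?_ ?_)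
    · exact Int.abs_sub_lt_one_of_floor_eq_floor (congrArg Prod.fst hab)
    · exact Int.abs_sub_lt_one_of_floor_eq_floor (congrArg Prod.snd hab)
  calc {a | f a ∈ cross}.ncard
      ≤ (cells : Set (ℤ × ℤ)).ncard := ncard_le_ncard_of_injOn cell hmaps hinj
    _ = 7 := by rw [ncard_coe_finset]; rfl

lemma mem_cross_of_dist_lt {s : ℝ × ℝ} (hs : 1 ≤ dist s (-1, -1))
    (h : dist s (0, -1) < 1 ∨ dist s (0, 0) < 1) : s ∈ cross := by
  rw [mem_cross]
  simp only [Prod.dist_eq, Real.dist_eq, max_lt_iff, le_max_iff, abs_lt, le_abs] at hs h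
  have hnonneg : 0 ≤ s.1 ∨ 0 ≤ s.2 := by grind
  grind

lemma mem_cross_of_conflict {s i e : ℝ × ℝ} (hpath : IsCornerPath s i e)
    (hs : 1 ≤ dist s (-1, -1)) (he : 1 ≤ dist e (0, 0)) (h : Conflict s i (0, -1) (0, 0)) :
    s ∈ cross ∨ reflect e ∈ cross := by
  by_cases hrest : dist s (0, -1) < 1 ∨ dist s (0, 0) < 1
  · exact Or.inl (mem_cross_of_dist_lt hs hrest)
  have hi : dist i (0, 0) < 1 := by unfold Conflict at h; tauto
  have hs₀ : 1 ≤ dist s (0, 0) := not_lt.1 fun h => hrest (Or.inr h)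
  obtain ⟨hcorner, hse⟩ := hpath
  simp only [mem_cross, reflect, Prod.dist_eq, Real.dist_eq, max_lt_iff, max_le_iff, le_max_iff,
    abs_lt, abs_le, le_abs, sub_zero] at *
  obtain rfl | rfl := hcorner
  · have hs₂ : s.2 ≤ -1 ∨ 1 ≤ s.2 := by grind
    have he₁ : e.1 ≤ -1 ∨ 1 ≤ e.1 := by grind
    by_cases hright : 0 ≤ s.1
    · have hvertical : (0 ≤ s.1 ∧ s.1 < 1) ∧ (-2 < s.2 ∧ s.2 < 2) := by grind
      exact Or.inl (Or.inl hvertical)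
    · have habove : 1 ≤ s.2 := hs₂.resolve_left (by grind)
      have hmoves_left : e.1 ≤ -1 := he₁.resolve_right (by grind)
      right; right; constructor <;> constructor <;> linarith
  · have hs₁ : s.1 ≤ -1 ∨ 1 ≤ s.1 := by grind
    have he₂ : e.2 ≤ -1 ∨ 1 ≤ e.2 := by grind
    by_cases habove : 0 ≤ s.2
    · have hhorizontal : (-2 < s.1 ∧ s.1 < 2) ∧ (0 ≤ s.2 ∧ s.2 < 1) := by grind
      exact Or.inl (Or.inr hhorizontal)
    · have hright : 1 ≤ s.1 := hs₁.resolve_left (by grind)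
      have hmoves_down : e.2 ≤ -1 := he₂.resolve_right (by grind)
      right; left; constructor <;> constructor <;> linarith

lemma mem_cross_of_conflict_reverse {s i e : ℝ × ℝ} (hpath : IsCornerPath s i e)
    (hs : 1 ≤ dist s (-1, -1)) (he : 1 ≤ dist e (0, 0)) (h : Conflict e i (0, -1) (-1, -1)) :
    s ∈ cross ∨ reflect e ∈ cross := by
  have hr := isGridIsometry_reflect
  have hS : reflect (-1, -1) = (0, 0) := by norm_num [reflect]
  have hI : reflect (0, -1) = (0, -1) := by norm_num [reflect]
  have hE : reflect (0, 0) = (-1, -1) := by norm_num [reflect]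
  have hcross := mem_cross_of_conflict (hr.map_isCornerPath hpath.symm)
    (by rwa [← hE, hr.isometry.dist_eq]) (by rwa [← hS, hr.isometry.dist_eq])
    (by simpa only [hS, hI] using h.map hr.isometry)
  rw [reflect_reflect] at hcross
  exact hcross.symm

/-- No other movement is executed while label `j` moves; the remaining movements may be executed
simultaneously. -/
def RunsAlone {k n : ℕ} (T : TransitionInstance k n) (τ : Fin n → ℝ) (j : Fin n) : Prop :=
  ∀ i : Fin n, i ≠ j → τ i + (T.mov i).dur ≤ τ j ∨ τ j + (T.mov j).dur ≤ τ i

namespace TransitionInstance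

variable {k n : ℕ}

/-- The labeling `L₁`: the start positions of all labels, stationary ones included. -/
def start (T : TransitionInstance k n) : Fin k ⊕ Fin n → ℝ × ℝ :=
  Sum.elim T.stat fun j => (T.mov j).S

/-- The intermediate positions of all labels, stationary ones included. -/
def mid (T : TransitionInstance k n) : Fin k ⊕ Fin n → ℝ × ℝ :=
  Sum.elim T.stat fun j => (T.mov j).I

/-- The labeling `L₂`: the end positions of all labels, stationary ones included. -/
def finish (T : TransitionInstance k n) : Fin k ⊕ Fin n → ℝ × ℝ :=
  Sum.elim T.stat fun j => (T.mov j).E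

lemma one_le_dist_start (T : TransitionInstance k n) :
    Pairwise fun a b => 1 ≤ dist (T.start a) (T.start b) :=
  fun a b hab => not_lt.1 (overlap_iff_dist_lt.not.1 (T.free_start a b hab))

lemma one_le_dist_finish (T : TransitionInstance k n) :
    Pairwise fun a b => 1 ≤ dist (T.finish a) (T.finish b) :=
  fun a b hab => not_lt.1 (overlap_iff_dist_lt.not.1 (T.free_end a b hab))

lemma isCornerPath (T : TransitionInstance k n) (a : Fin k ⊕ Fin n) :
    IsCornerPath (T.start a) (T.mid a) (T.finish a) := by
  cases a with
  | inl a => exact IsCornerPath.refl _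
  | inr i => exact (T.mov i).isCornerPath

lemma conflict_of_overlap (T : TransitionInstance k n) {τ : Fin n → ℝ} {j : Fin n}
    (hj : RunsAlone T τ j) {a : Fin k ⊕ Fin n} (ha : a ≠ Sum.inr j) {t : ℝ}
    (h : Overlap (traj T τ t a) (traj T τ t (Sum.inr j))) :
    Conflict (T.start a) (T.mid a) (T.mov j).I (T.mov j).E ∨
      Conflict (T.finish a) (T.mid a) (T.mov j).I (T.mov j).S := by
  have hS := T.free_start a (Sum.inr j) ha
  have hE := T.free_end a (Sum.inr j) ha
  cases a with
  | inl a =>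
    have hX : dist ((T.mov j).pos (t - τ j)) (T.stat a) < 1 :=
      overlap_iff_dist_lt.1 h.symm
    simp only [Sum.elim_inl, Sum.elim_inr, overlap_iff_dist_lt] at hS hE
    have hmeets := (T.mov j).dist_lt_of_pos hX
    simp only [dist_comm _ (T.stat a)] at hmeets
    exact Or.inl (Or.inl (by tauto))
  | inr i =>
    have hij : i ≠ j := fun hij => ha (congrArg Sum.inr hij)
    obtain hbefore | hafter := hj i hij
    · refine Or.inr (Movement.conflict_of_overlap (mt Overlap.symm hS) (mt Overlap.symm hE) ?_
        h.symm).reverse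
      exact (le_total t (τ j)).imp (fun ht => by linarith) (fun ht => by linarith)
    · refine Or.inl (Movement.conflict_of_overlap hS hE ?_ h)
      exact (le_total t (τ i)).imp (fun ht => by linarith) (fun ht => by linarith)

lemma mem_cross_of_overlap (T : TransitionInstance k n) {τ : Fin n → ℝ} {j : Fin n}
    (hj : RunsAlone T τ j) {φ : ℝ × ℝ → ℝ × ℝ} (hφ : IsGridIsometry φ)
    (hS : φ (T.mov j).S = (-1, -1)) (hI : φ (T.mov j).I = (0, -1))
    (hE : φ (T.mov j).E = (0, 0)) {a : Fin k ⊕ Fin n}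
    (ha : a ≠ Sum.inr j) {t : ℝ} (h : Overlap (traj T τ t a) (traj T τ t (Sum.inr j))) :
    φ (T.start a) ∈ cross ∨ reflect (φ (T.finish a)) ∈ cross := by
  have hpath := hφ.map_isCornerPath (T.isCornerPath a)
  have hs : 1 ≤ dist (φ (T.start a)) (-1, -1) := by
    rw [← hS, hφ.isometry.dist_eq]; exact T.one_le_dist_start ha
  have he : 1 ≤ dist (φ (T.finish a)) (0, 0) := by
    rw [← hE, hφ.isometry.dist_eq]; exact T.one_le_dist_finish ha
  obtain hc | hc := T.conflict_of_overlap hj ha h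
  · exact mem_cross_of_conflict hpath hs he (hI ▸ hE ▸ hc.map hφ.isometry)
  · exact mem_cross_of_conflict_reverse hpath hs he (hI ▸ hS ▸ hc.map hφ.isometry)

end TransitionInstance

theorem consecutive_diagonal_degree_le_general {k n : ℕ} (T : TransitionInstance k n)
    (τ : Fin n → ℝ) (j : Fin n) (hj : RunsAlone T τ j) (hdiag : (T.mov j).Diagonal) :
    {a : Fin k ⊕ Fin n | a ≠ Sum.inr j ∧
      ∃ t : ℝ, Overlap (traj T τ t a) (traj T τ t (Sum.inr j))}.ncard ≤ 14 := by
  obtain ⟨φ, hφ, hS, hI, hE⟩ := hdiag.exists_normalization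
  have hr := isGridIsometry_reflect
  let startCross := {a | φ (T.start a) ∈ cross}
  let finishCross := {a | reflect (φ (T.finish a)) ∈ cross}
  have hsub : {a : Fin k ⊕ Fin n | a ≠ Sum.inr j ∧
      ∃ t : ℝ, Overlap (traj T τ t a) (traj T τ t (Sum.inr j))} ⊆ startCross ∪ finishCross := by
    rintro a ⟨ha, t, hov⟩
    exact T.mem_cross_of_overlap hj hφ hS hI hE ha hov
  have hstart : startCross.ncard ≤ 7 := ncard_mem_cross_le fun a b hab =>
    (T.one_le_dist_start hab).trans_eq (hφ.isometry.dist_eq ..).symm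
  have hfinish : finishCross.ncard ≤ 7 := ncard_mem_cross_le fun a b hab =>
    (T.one_le_dist_finish hab).trans_eq ((hr.comp hφ).isometry.dist_eq ..).symm
  exact (ncard_le_ncard hsub).trans ((ncard_union_le ..).trans (add_le_add hstart hfinish))

/-- In a consecutive transition, a moving label whose movement is diagonal overlaps at most `14`
other labels during the entire transition. -/
theorem consecutive_diagonal_degree_le {k n : ℕ} (T : TransitionInstance k n) (τ : Fin n → ℝ)
    (hcons : Consecutive T τ) (j : Fin n) (hdiag : (T.mov j).Diagonal) :
    {a : Fin k ⊕ Fin n | a ≠ Sum.inr j ∧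
      ∃ t : ℝ, Overlap (traj T τ t a) (traj T τ t (Sum.inr j))}.ncard ≤ 14 :=
  consecutive_diagonal_degree_le_general T τ j (fun i => hcons i j) hdiag
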